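/- Under the two-set greedy algorithm, if d_n(F) ≤ C₀ e^{−c₀ log(n) n^{α}} for all n = 1, 2, … for some constants C₀ > 0, c₀ > 0 and α > 0, then σ_n(F̃) ≤ √(2C₀) · e^{−c̃₁ log(n) n^{α}} for all n = 2, 3, …, where c̃₁ := 2^{−2−2α} c₀ < c₀. -/

import Mathlib

/-!
The product of the squared greedy errors `σ_0² ⋯ σ_{K-1}²` is the Gram determinant of
`f_0, …, f_{K-1}`, so it does not change when these vectors are rotated by a unitary matrix. Given
an `m`-dimensional subspace `Y` that is nearly optimal for `d_m`, rotate so that `k = K - m` of the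
new vectors are orthogonal to `Y`. Their squared norms add up to at most `K d_m²`, and Hadamard's
inequality followed by AM-GM bounds the product by `(A/m)^m (B/k)^k`, where `A` and `B` are the
sums of the squared norms over the two blocks.

With `m = k` this gives `σ_{2m-1}² ≤ 2 d_m`, which is enough for `n ≥ 3`. For `n = 2` it only
involves `d_1`, whose assumed bound does not decay because `log 1 = 0`; there, the splittings
`3 = 2 + 1` and `3 = 1 + 2` are combined into `σ_2² ≤ 2 √(d_1 d_2)`.
-/

lemma prod_le_sum_div_card_pow {ι : Type*} [Fintype ι] (z : ι → ℝ) (hz : ∀ i, 0 ≤ z i) :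
    ∏ i, z i ≤ ((∑ i, z i) / Fintype.card ι) ^ Fintype.card ι := by
  cases isEmpty_or_nonempty ι
  · simp
  have amgm := Real.geom_mean_le_arith_mean Finset.univ (fun _ => 1) z (by simp)
    (by simp [Fintype.card_pos]) fun i _ => hz i
  simp only [Real.rpow_one, Finset.sum_const, Finset.card_univ, nsmul_eq_mul, mul_one,
    one_mul] at amgm
  calc ∏ i, z i = ((∏ i, z i) ^ (Fintype.card ι : ℝ)⁻¹) ^ Fintype.card ι :=
        (Real.rpow_inv_natCast_pow (Finset.prod_nonneg fun i _ => hz i) Fintype.card_ne_zero).symm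
    _ ≤ ((∑ i, z i) / Fintype.card ι) ^ Fintype.card ι :=
        pow_le_pow_left₀ (Real.rpow_nonneg (Finset.prod_nonneg fun i _ => hz i) _) amgm _

lemma le_apply_of_forall_lt_le_apply {X Y : Type*} [LinearOrder X] [TopologicalSpace X]
    [OrderTopology X] [DenselyOrdered X] [NoMaxOrder X] [Preorder Y] [TopologicalSpace Y]
    [ClosedIciTopology Y] {φ : X → Y} (hφ : Continuous φ) {d : X} {y : Y}
    (h : ∀ δ, d < δ → y ≤ φ δ) : y ≤ φ d :=
  ge_of_tendsto (hφ.continuousWithinAt (s := Set.Ioi d)) (eventually_mem_nhdsWithin.mono h)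

section Gram

open Matrix InnerProductSpace Module

variable {𝕜 E ι κ : Type*} [RCLike 𝕜] [NormedAddCommGroup E] [InnerProductSpace 𝕜 E]

lemma infDist_submodule_le_norm (Y : Submodule 𝕜 E) (x : E) :
    Metric.infDist x (Y : Set E) ≤ ‖x‖ :=
  (Metric.infDist_le_dist_of_mem Y.zero_mem).trans_eq (dist_zero_right x)

lemma norm_sub_starProjection_eq_infDist (Y : Submodule 𝕜 E) [Y.HasOrthogonalProjection] (x : E) :
    ‖x - Y.starProjection x‖ = Metric.infDist x (Y : Set E) := by
  rw [Submodule.starProjection_minimal, Metric.infDist_eq_iInf]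
  simp only [dist_eq_norm]
  rfl

lemma norm_gramSchmidt_eq_infDist [LinearOrder ι] [LocallyFiniteOrderBot ι] [WellFoundedLT ι]
    (v : ι → E) (i : ι) :
    ‖gramSchmidt 𝕜 v i‖ = Metric.infDist (v i) (Submodule.span 𝕜 (v '' Set.Iio i) : Set E) := by
  have : FiniteDimensional 𝕜 (Submodule.span 𝕜 (v '' Set.Iio i)) :=
    FiniteDimensional.span_of_finite 𝕜 ((Set.finite_Iio i).image v)
  rw [← norm_sub_starProjection_eq_infDist,
    Submodule.eq_starProjection_of_mem_orthogonal' (z := gramSchmidt 𝕜 v i) ?_ ?_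
      (sub_add_cancel (v i) (gramSchmidt 𝕜 v i)).symm, sub_sub_cancel]
  all_goals rw [← span_gramSchmidt_Iio 𝕜 v i]
  · rw [gramSchmidt_def, sub_sub_cancel]
    refine Submodule.sum_mem _ fun j hj => ?_
    rw [Submodule.starProjection_singleton]
    exact Submodule.smul_mem _ _ (Submodule.subset_span ⟨j, Finset.mem_Iio.1 hj, rfl⟩)
  · rw [← Submodule.span_singleton_le_iff_mem, ← Submodule.isOrtho_iff_le,
      Submodule.isOrtho_span]
    rintro _ rfl _ ⟨j, hj, rfl⟩
    exact gramSchmidt_orthogonal 𝕜 v (ne_of_gt hj)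

lemma norm_gramSchmidt_le_norm [LinearOrder ι] [LocallyFiniteOrderBot ι] [WellFoundedLT ι]
    (v : ι → E) (i : ι) : ‖gramSchmidt 𝕜 v i‖ ≤ ‖v i‖ :=
  (norm_gramSchmidt_eq_infDist v i).trans_le (infDist_submodule_le_norm _ _)

lemma gram_sum_smul [Fintype ι] (v : ι → E) (C : Matrix ι κ 𝕜) :
    gram 𝕜 (fun k => ∑ i, C i k • v i) = Cᴴ * gram 𝕜 v * C := by
  ext k l
  simp only [gram_apply, sum_inner, inner_sum, inner_smul_left, inner_smul_right, mul_apply,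
    conjTranspose_apply, Finset.sum_mul, Finset.mul_sum, starRingEnd_apply]
  exact Finset.sum_congr rfl fun _ _ => Finset.sum_congr rfl fun _ _ => by ring

lemma trace_gram [Fintype ι] (v : ι → E) : (gram 𝕜 v).trace = ∑ i, (‖v i‖ : 𝕜) ^ 2 := by
  simp only [trace, diag_apply, gram_apply, inner_self_eq_norm_sq_to_K]

lemma sum_norm_sq_sum_smul_of_mem_unitaryGroup [Fintype ι] [DecidableEq ι] (v : ι → E)
    {C : Matrix ι ι 𝕜} (hC : C ∈ unitaryGroup ι 𝕜) :
    ∑ k, ‖∑ i, C i k • v i‖ ^ 2 = ∑ i, ‖v i‖ ^ 2 := by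
  have h : (gram 𝕜 fun k => ∑ i, C i k • v i).trace = (gram 𝕜 v).trace := by
    rw [gram_sum_smul, trace_mul_cycle, ← star_eq_conjTranspose, mem_unitaryGroup_iff.1 hC,
      one_mul]
  rw [trace_gram, trace_gram] at h
  exact_mod_cast h

lemma det_gram_sum_smul [Fintype ι] [DecidableEq ι] (v : ι → E)
    (C : Matrix ι ι 𝕜) :
    (gram 𝕜 fun k => ∑ i, C i k • v i).det = star C.det * C.det * (gram 𝕜 v).det := by
  rw [gram_sum_smul, det_mul, det_mul, det_conjTranspose]
  ring

lemma det_gram_eq_prod_norm_gramSchmidt_sq [LinearOrder ι] [LocallyFiniteOrderBot ι]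
    [Fintype ι] (v : ι → E) :
    (gram 𝕜 v).det = ∏ i, (‖gramSchmidt 𝕜 v i‖ : 𝕜) ^ 2 := by
  set e := gramSchmidt 𝕜 v
  let C : Matrix ι ι 𝕜 := of fun j i =>
    if j < i then inner 𝕜 (e j) (v i) / (‖e j‖ : 𝕜) ^ 2 else if j = i then 1 else 0
  have v_eq (i : ι) : v i = ∑ j, C j i • e j := by
    have split (j : ι) : C j i • e j = (if j = i then e j else 0) +
        if j ∈ Finset.Iio i then (inner 𝕜 (e j) (v i) / (‖e j‖ : 𝕜) ^ 2) • e j else 0 := by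
      rcases lt_trichotomy j i with h | rfl | h
      · simp [C, h, h.ne]
      · simp [C]
      · simp [C, h.not_gt, h.ne']
    simp only [split, Finset.sum_add_distrib, Finset.sum_ite_eq', Finset.mem_univ, if_true,
      Finset.sum_ite_mem, Finset.univ_inter]
    exact gramSchmidt_def'' 𝕜 v i
  have det_C : C.det = 1 := by
    rw [det_of_isUpperTriangular fun i j (hij : j < i) => by simp [C, hij.not_gt, hij.ne']]
    simp [C]
  have gram_e : gram 𝕜 e = diagonal fun i => (‖e i‖ : 𝕜) ^ 2 := by
    ext i j
    rcases eq_or_ne i j with rfl | hij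
    · simp [inner_self_eq_norm_sq_to_K]
    · simp [hij, e, gramSchmidt_orthogonal 𝕜 v hij]
  rw [funext v_eq, det_gram_sum_smul, det_C, gram_e, det_diagonal, star_one, one_mul, one_mul]

lemma prod_norm_gramSchmidt_sq_sum_smul_of_mem_unitaryGroup [LinearOrder ι]
    [LocallyFiniteOrderBot ι] [Fintype ι] (v : ι → E) {C : Matrix ι ι 𝕜}
    (hC : C ∈ unitaryGroup ι 𝕜) :
    ∏ k, ‖gramSchmidt 𝕜 (fun k => ∑ i, C i k • v i) k‖ ^ 2 = ∏ i, ‖gramSchmidt 𝕜 v i‖ ^ 2 := by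
  have h := det_gram_sum_smul v C
  rw [Unitary.star_mul_self_of_mem (det_of_mem_unitary hC), one_mul,
    det_gram_eq_prod_norm_gramSchmidt_sq, det_gram_eq_prod_norm_gramSchmidt_sq] at h
  exact_mod_cast h

lemma exists_orthonormalBasis_forall_mem [FiniteDimensional 𝕜 E] [Fintype ι]
    (hι : finrank 𝕜 E = Fintype.card ι) (V : Submodule 𝕜 E) (s : Finset ι)
    (hs : s.card ≤ finrank 𝕜 V) : ∃ b : OrthonormalBasis ι 𝕜 E, ∀ i ∈ s, b i ∈ V := by
  obtain ⟨g⟩ : Nonempty (s ↪ Fin (finrank 𝕜 V)) :=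
    Function.Embedding.nonempty_of_card_le (by simpa using hs)
  let x : ι → E := Function.extend Subtype.val (fun i => (stdOrthonormalBasis 𝕜 V (g i) : E)) 0
  have x_apply (i : s) : x i = stdOrthonormalBasis 𝕜 V (g i) :=
    Subtype.val_injective.extend_apply _ _ i
  have hx : Orthonormal 𝕜 ((s : Set ι).domRestrict x) := by
    rw [show (s : Set ι).domRestrict x = _ from funext x_apply]
    exact ((stdOrthonormalBasis 𝕜 V).orthonormal.comp g g.injective).comp_linearIsometry
      V.subtypeₗᵢ
  obtain ⟨b, hb⟩ := hx.exists_orthonormalBasis_extension_of_card_eq hι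
  exact ⟨b, fun i hi => by rw [hb i hi, x_apply ⟨i, hi⟩]; exact Submodule.coe_mem _⟩

lemma exists_mem_unitaryGroup_sum_smul_eq_zero [Fintype ι] [DecidableEq ι] {W : Type*}
    [AddCommGroup W] [Module 𝕜 W] [FiniteDimensional 𝕜 W] (w : ι → W) (s : Finset ι)
    (hs : finrank 𝕜 W + s.card ≤ Fintype.card ι) :
    ∃ C ∈ unitaryGroup ι 𝕜, ∀ k ∈ s, ∑ i, C i k • w i = 0 := by
  let L : EuclideanSpace 𝕜 ι →ₗ[𝕜] W :=
    Fintype.linearCombination 𝕜 w ∘ₗ (WithLp.linearEquiv 2 𝕜 (ι → 𝕜)).toLinearMap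
  have rank_nullity : finrank 𝕜 L.range + finrank 𝕜 L.ker = Fintype.card ι :=
    L.finrank_range_add_finrank_ker.trans finrank_euclideanSpace
  have range_le : finrank 𝕜 L.range ≤ finrank 𝕜 W := L.range.finrank_le
  obtain ⟨b, hb⟩ := exists_orthonormalBasis_forall_mem finrank_euclideanSpace L.ker s (by omega)
  exact ⟨(EuclideanSpace.basisFun ι 𝕜).toBasis.toMatrix b,
    (EuclideanSpace.basisFun ι 𝕜).toMatrix_orthonormalBasis_mem_unitary b, hb⟩

lemma exists_rotation_near_submodule [LinearOrder ι] [LocallyFiniteOrderBot ι]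
    [Fintype ι] (v : ι → E) (Y : Submodule 𝕜 E) [FiniteDimensional 𝕜 Y] (s : Finset ι)
    (hs : finrank 𝕜 Y + s.card ≤ Fintype.card ι) :
    ∃ u : ι → E, ∏ k, ‖gramSchmidt 𝕜 u k‖ ^ 2 = ∏ i, ‖gramSchmidt 𝕜 v i‖ ^ 2 ∧
      ∑ k, ‖u k‖ ^ 2 = ∑ i, ‖v i‖ ^ 2 ∧
      ∑ k ∈ s, ‖u k‖ ^ 2 ≤ ∑ i, Metric.infDist (v i) (Y : Set E) ^ 2 := by
  obtain ⟨C, hC, hker⟩ :=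
    exists_mem_unitaryGroup_sum_smul_eq_zero (fun i => Y.orthogonalProjectionOnto (v i)) s hs
  set u : ι → E := fun k => ∑ i, C i k • v i with hu
  have proj_u {k : ι} (hk : k ∈ s) : Y.starProjection (u k) = 0 := by
    simpa [hu] using congrArg Subtype.val (hker k hk)
  refine ⟨u, prod_norm_gramSchmidt_sq_sum_smul_of_mem_unitaryGroup v hC,
    sum_norm_sq_sum_smul_of_mem_unitaryGroup v hC, ?_⟩
  calc ∑ k ∈ s, ‖u k‖ ^ 2 = ∑ k ∈ s, ‖u k - Y.starProjection (u k)‖ ^ 2 :=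
        Finset.sum_congr rfl fun k hk => by rw [proj_u hk, sub_zero]
    _ ≤ ∑ k, ‖u k - Y.starProjection (u k)‖ ^ 2 :=
        Finset.sum_le_univ_sum_of_nonneg fun _ => sq_nonneg _
    _ = ∑ k, ‖∑ i, C i k • (v i - Y.starProjection (v i))‖ ^ 2 := by
        simp only [hu, map_sum, map_smul, smul_sub, Finset.sum_sub_distrib]
    _ = ∑ i, Metric.infDist (v i) (Y : Set E) ^ 2 := by
        simp only [sum_norm_sq_sum_smul_of_mem_unitaryGroup _ hC,
          norm_sub_starProjection_eq_infDist]

theorem exists_prod_norm_gramSchmidt_sq_le {m k : ℕ} (v : Fin (m + k) → E) (Y : Submodule 𝕜 E)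
    [FiniteDimensional 𝕜 Y] (hY : finrank 𝕜 Y ≤ m) :
    ∃ A B : ℝ, 0 ≤ A ∧ 0 ≤ B ∧ A + B = ∑ i, ‖v i‖ ^ 2 ∧
      B ≤ ∑ i, Metric.infDist (v i) (Y : Set E) ^ 2 ∧
      ∏ i, ‖gramSchmidt 𝕜 v i‖ ^ 2 ≤ (A / m) ^ m * (B / k) ^ k := by
  obtain ⟨u, prod_u, sum_u, sum_tail⟩ := exists_rotation_near_submodule v Y
    (Finset.univ.map (Fin.natAddEmb m)) (by simpa using hY)
  refine ⟨∑ l : Fin m, ‖u (Fin.castAdd k l)‖ ^ 2, ∑ l : Fin k, ‖u (Fin.natAdd m l)‖ ^ 2,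
    by positivity, by positivity, ?_, by simpa using sum_tail, ?_⟩
  · rw [← sum_u, Fin.sum_univ_add]
  calc ∏ i, ‖gramSchmidt 𝕜 v i‖ ^ 2 = ∏ l, ‖gramSchmidt 𝕜 u l‖ ^ 2 := prod_u.symm
    _ ≤ ∏ l, ‖u l‖ ^ 2 := by
        gcongr with l
        exact norm_gramSchmidt_le_norm u l
    _ = (∏ l, ‖u (Fin.castAdd k l)‖ ^ 2) * ∏ l, ‖u (Fin.natAdd m l)‖ ^ 2 :=
        Fin.prod_univ_add _
    _ ≤ ((∑ l, ‖u (Fin.castAdd k l)‖ ^ 2) / m) ^ m *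
          ((∑ l, ‖u (Fin.natAdd m l)‖ ^ 2) / k) ^ k := by
        gcongr
        · simpa using prod_le_sum_div_card_pow (fun l => ‖u (Fin.castAdd k l)‖ ^ 2)
            fun _ => sq_nonneg _
        · simpa using prod_le_sum_div_card_pow (fun l => ‖u (Fin.natAdd m l)‖ ^ 2)
            fun _ => sq_nonneg _

end Gram

section Greedy

open InnerProductSpace Module

variable {𝕜 H : Type*} [RCLike 𝕜] [NormedAddCommGroup H] [InnerProductSpace 𝕜 H]

variable (𝕜) in
/-- The Kolmogorov `n`-width of `S`. A subspace from which the distances of points of `S` are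
unbounded contributes the junk value `0`, so the notion is only meaningful for bounded `S`. -/
noncomputable def kolmogorovWidth (S : Set H) (n : ℕ) : ℝ :=
  ⨅ Y : {Y : Submodule 𝕜 H // Module.rank 𝕜 Y ≤ n},
    ⨆ g : S, Metric.infDist (g : H) ((Y : Submodule 𝕜 H) : Set H)

variable (𝕜) in
/-- The distance from `f n` to the span of its predecessors. For a greedy sequence in `S` this is
the error `σ_n(S)` of the paper. -/
noncomputable def greedyError (f : ℕ → H) (n : ℕ) : ℝ :=
  Metric.infDist (f n) (Submodule.span 𝕜 (f '' Set.Iio n) : Set H)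

variable (𝕜) in
/-- Output of the greedy algorithm on `S`: each `f n` is, among the elements of `S`, farthest from
the span of its predecessors. -/
structure IsGreedySequence (S : Set H) (f : ℕ → H) : Prop where
  mem (n : ℕ) : f n ∈ S
  infDist_le (n : ℕ) {g : H} (hg : g ∈ S) :
    Metric.infDist g (Submodule.span 𝕜 (f '' Set.Iio n) : Set H) ≤ greedyError 𝕜 f n

variable {S T : Set H} {f : ℕ → H}

lemma bddAbove_range_infDist_submodule (hS : Bornology.IsBounded S) (Y : Submodule 𝕜 H) :
    BddAbove (Set.range fun g : S => Metric.infDist (g : H) (Y : Set H)) := by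
  obtain ⟨R, hR⟩ := hS.exists_norm_le
  exact ⟨R, Set.forall_mem_range.2 fun g => (infDist_submodule_le_norm Y _).trans (hR g g.2)⟩

lemma iSup_infDist_nonneg (Y : Set H) : 0 ≤ ⨆ g : S, Metric.infDist (g : H) Y :=
  Real.iSup_nonneg fun _ => Metric.infDist_nonneg

lemma kolmogorovWidth_nonneg (S : Set H) (n : ℕ) : 0 ≤ kolmogorovWidth 𝕜 S n :=
  Real.iInf_nonneg fun _ => iSup_infDist_nonneg _

lemma kolmogorovWidth_mono (hT : Bornology.IsBounded T) (hST : S ⊆ T) (n : ℕ) :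
    kolmogorovWidth 𝕜 S n ≤ kolmogorovWidth 𝕜 T n :=
  ciInf_mono ⟨0, Set.forall_mem_range.2 fun _ => iSup_infDist_nonneg _⟩ fun Y =>
    Real.iSup_le (fun g => le_ciSup (bddAbove_range_infDist_submodule hT Y.1) ⟨g, hST g.2⟩)
      (iSup_infDist_nonneg _)

lemma exists_submodule_infDist_le_of_kolmogorovWidth_lt (hS : Bornology.IsBounded S) {n : ℕ}
    {δ : ℝ} (hδ : kolmogorovWidth 𝕜 S n < δ) :
    ∃ Y : Submodule 𝕜 H, FiniteDimensional 𝕜 Y ∧ finrank 𝕜 Y ≤ n ∧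
      ∀ g ∈ S, Metric.infDist g (Y : Set H) ≤ δ := by
  have : Nonempty {Y : Submodule 𝕜 H // Module.rank 𝕜 Y ≤ n} := ⟨⊥, by simp⟩
  obtain ⟨⟨Y, hY⟩, hlt⟩ := exists_lt_of_ciInf_lt hδ
  exact ⟨Y, rank_lt_aleph0_iff.1 (hY.trans_lt Cardinal.natCast_lt_aleph0),
    finrank_le_of_rank_le hY,
    fun g hg => (le_ciSup (bddAbove_range_infDist_submodule hS Y) ⟨g, hg⟩).trans hlt.le⟩

lemma greedyError_nonneg (f : ℕ → H) (n : ℕ) : 0 ≤ greedyError 𝕜 f n :=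
  Metric.infDist_nonneg

lemma greedyError_zero (f : ℕ → H) : greedyError 𝕜 f 0 = ‖f 0‖ := by
  simp [greedyError]

lemma norm_gramSchmidt_eq_greedyError (f : ℕ → H) {K : ℕ} (i : Fin K) :
    ‖gramSchmidt 𝕜 (fun j : Fin K => f j) i‖ = greedyError 𝕜 f i := by
  have image_Iio : (fun j : Fin K => f j) '' Set.Iio i = f '' Set.Iio (i : ℕ) := by
    rw [← Fin.image_val_Iio, Set.image_image]
  rw [norm_gramSchmidt_eq_infDist, image_Iio, greedyError]

namespace IsGreedySequence

lemma of_infDist_eq_iSup (hS : Bornology.IsBounded S) (hmem : ∀ n, f n ∈ S)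
    (hsup : ∀ n, greedyError 𝕜 f n =
      ⨆ g : S, Metric.infDist (g : H) (Submodule.span 𝕜 (f '' Set.Iio n) : Set H)) :
    IsGreedySequence 𝕜 S f where
  mem := hmem
  infDist_le n g hg := by
    rw [hsup n]
    exact le_ciSup (bddAbove_range_infDist_submodule hS _) ⟨g, hg⟩

lemma norm_le (hf : IsGreedySequence 𝕜 S f) {g : H} (hg : g ∈ S) : ‖g‖ ≤ greedyError 𝕜 f 0 := by
  simpa using hf.infDist_le 0 hg

lemma isBounded (hf : IsGreedySequence 𝕜 S f) : Bornology.IsBounded S :=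
  isBounded_iff_forall_norm_le.2 ⟨_, fun _ => hf.norm_le⟩

lemma antitone_greedyError (hf : IsGreedySequence 𝕜 S f) : Antitone (greedyError 𝕜 f) :=
  fun i j hij =>
    (Metric.infDist_le_infDist_of_subset
      (Submodule.span_mono (Set.image_mono (Set.Iio_subset_Iio hij)))
      (Submodule.nonempty _)).trans (hf.infDist_le i (hf.mem j))

lemma exists_prod_greedyError_sq_le (hf : IsGreedySequence 𝕜 S f) (m k : ℕ) {δ : ℝ}
    (hδ : kolmogorovWidth 𝕜 S m < δ) :
    ∃ A B : ℝ, 0 ≤ A ∧ 0 ≤ B ∧ A + B ≤ (m + k) * greedyError 𝕜 f 0 ^ 2 ∧ B ≤ (m + k) * δ ^ 2 ∧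
      ∏ i ∈ Finset.range (m + k), greedyError 𝕜 f i ^ 2 ≤ (A / m) ^ m * (B / k) ^ k := by
  obtain ⟨Y, _, hY, dist_Y⟩ := exists_submodule_infDist_le_of_kolmogorovWidth_lt hf.isBounded hδ
  obtain ⟨A, B, hA, hB, hAB, hBY, hprod⟩ :=
    exists_prod_norm_gramSchmidt_sq_le (fun j : Fin (m + k) => f j) Y hY
  have sum_le {z : Fin (m + k) → ℝ} {c : ℝ} (hz : ∀ i, z i ≤ c) : ∑ i, z i ≤ (m + k) * c := by
    simpa using Finset.sum_le_card_nsmul Finset.univ z c fun i _ => hz i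
  refine ⟨A, B, hA, hB, hAB.trans_le (sum_le fun i => ?_), hBY.trans (sum_le fun i => ?_), ?_⟩
  · exact pow_le_pow_left₀ (norm_nonneg _) (hf.norm_le (hf.mem i)) 2
  · exact pow_le_pow_left₀ Metric.infDist_nonneg (dist_Y _ (hf.mem i)) 2
  · simpa only [norm_gramSchmidt_eq_greedyError,
      Fin.prod_univ_eq_prod_range fun i => greedyError 𝕜 f i ^ 2] using hprod

lemma greedyError_sq_pow_le_prod (hf : IsGreedySequence 𝕜 S f) {K n : ℕ} (hK : K ≤ n + 1) :
    (greedyError 𝕜 f n ^ 2) ^ K ≤ ∏ i ∈ Finset.range K, greedyError 𝕜 f i ^ 2 := by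
  calc (greedyError 𝕜 f n ^ 2) ^ K = ∏ _i ∈ Finset.range K, greedyError 𝕜 f n ^ 2 := by simp
    _ ≤ ∏ i ∈ Finset.range K, greedyError 𝕜 f i ^ 2 := by
        refine Finset.prod_le_prod (fun _ _ => sq_nonneg _) fun i hi => ?_
        have hin : i ≤ n := by have := Finset.mem_range.1 hi; omega
        exact pow_le_pow_left₀ (greedyError_nonneg f n) (hf.antitone_greedyError hin) 2

lemma greedyError_sq_le (hf : IsGreedySequence 𝕜 S f) {m n : ℕ} (hm : 1 ≤ m)
    (hmn : 2 * m ≤ n + 1) :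
    greedyError 𝕜 f n ^ 2 ≤ 2 * greedyError 𝕜 f 0 * kolmogorovWidth 𝕜 S m := by
  refine le_apply_of_forall_lt_le_apply (φ := fun δ => 2 * greedyError 𝕜 f 0 * δ)
    (by fun_prop) fun δ hδ => ?_
  have hδ0 : 0 ≤ δ := (kolmogorovWidth_nonneg S m).trans hδ.le
  have hσ0 : 0 ≤ greedyError 𝕜 f 0 := greedyError_nonneg f 0
  obtain ⟨A, B, hA, hB, hAB, hBδ, hprod⟩ := hf.exists_prod_greedyError_sq_le m m hδ
  have hm0 : (0 : ℝ) < m := by exact_mod_cast hm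
  have hA' : A / m ≤ 2 * greedyError 𝕜 f 0 ^ 2 := by rw [div_le_iff₀ hm0]; linarith
  have hB' : B / m ≤ 2 * δ ^ 2 := by rw [div_le_iff₀ hm0]; linarith
  refine (pow_le_pow_iff_left₀ (by positivity) (by positivity) (n := m + m) (by omega)).1 ?_
  calc (greedyError 𝕜 f n ^ 2) ^ (m + m) ≤ (A / m) ^ m * (B / m) ^ m :=
        (hf.greedyError_sq_pow_le_prod (by omega)).trans hprod
    _ ≤ (2 * greedyError 𝕜 f 0 ^ 2) ^ m * (2 * δ ^ 2) ^ m := by gcongr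
    _ = (2 * greedyError 𝕜 f 0 * δ) ^ (m + m) := by rw [← mul_pow, pow_add, ← mul_pow]; ring

lemma greedyError_two_pow_four_le_kolmogorovWidth_two (hf : IsGreedySequence 𝕜 S f) :
    greedyError 𝕜 f 2 ^ 4 ≤ 8 * greedyError 𝕜 f 0 ^ 2 * kolmogorovWidth 𝕜 S 2 ^ 2 := by
  refine le_apply_of_forall_lt_le_apply (φ := fun δ => 8 * greedyError 𝕜 f 0 ^ 2 * δ ^ 2)
    (by fun_prop) fun δ hδ => ?_
  have h20 : greedyError 𝕜 f 2 ≤ greedyError 𝕜 f 0 := hf.antitone_greedyError (by norm_num)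
  have h21 : greedyError 𝕜 f 2 ≤ greedyError 𝕜 f 1 := hf.antitone_greedyError (by norm_num)
  have h2 : 0 ≤ greedyError 𝕜 f 2 := greedyError_nonneg f 2
  obtain ⟨A, B, hA, hB, hAB, hBδ, hprod⟩ := hf.exists_prod_greedyError_sq_le 2 1 hδ
  have sum_le : A + B ≤ 3 * greedyError 𝕜 f 0 ^ 2 := by norm_num at hAB; exact hAB
  have B_le : B ≤ 3 * δ ^ 2 := by norm_num at hBδ; exact hBδ
  have prod_le : greedyError 𝕜 f 0 ^ 2 * greedyError 𝕜 f 1 ^ 2 * greedyError 𝕜 f 2 ^ 2 ≤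
      (A / 2) ^ 2 * B := by simpa [Finset.prod_range_succ] using hprod
  generalize greedyError 𝕜 f 0 = s₀ at *
  generalize greedyError 𝕜 f 1 = s₁ at *
  generalize greedyError 𝕜 f 2 = s₂ at *
  rcases (h2.trans h20).eq_or_lt with rfl | hs₀
  · simp [le_antisymm h20 h2]
  refine le_of_mul_le_mul_left ?_ (pow_pos hs₀ 2)
  calc s₀ ^ 2 * s₂ ^ 4 = s₀ ^ 2 * s₂ ^ 2 * s₂ ^ 2 := by ring
    _ ≤ s₀ ^ 2 * s₁ ^ 2 * s₂ ^ 2 := by gcongr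
    _ ≤ (A / 2) ^ 2 * B := prod_le
    _ ≤ (3 * s₀ ^ 2 / 2) ^ 2 * (3 * δ ^ 2) := by gcongr; linarith
    _ = 27 / 4 * (s₀ ^ 4 * δ ^ 2) := by ring
    _ ≤ 8 * (s₀ ^ 4 * δ ^ 2) := by gcongr; norm_num
    _ = s₀ ^ 2 * (8 * s₀ ^ 2 * δ ^ 2) := by ring

lemma greedyError_two_pow_four_le_kolmogorovWidth_one (hf : IsGreedySequence 𝕜 S f) :
    greedyError 𝕜 f 2 ^ 4 ≤ 2 * greedyError 𝕜 f 0 ^ 2 * kolmogorovWidth 𝕜 S 1 ^ 2 := by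
  refine le_apply_of_forall_lt_le_apply (φ := fun δ => 2 * greedyError 𝕜 f 0 ^ 2 * δ ^ 2)
    (by fun_prop) fun δ hδ => ?_
  obtain ⟨A, B, hA, hB, hAB, hBδ, hprod⟩ := hf.exists_prod_greedyError_sq_le 1 2 hδ
  have sum_le : A + B ≤ 3 * greedyError 𝕜 f 0 ^ 2 := by norm_num at hAB; exact hAB
  have B_le : B ≤ 3 * δ ^ 2 := by norm_num at hBδ; exact hBδ
  have pow_le : (greedyError 𝕜 f 2 ^ 2) ^ 3 ≤ A * (B / 2) ^ 2 := by
    simpa using (hf.greedyError_sq_pow_le_prod (n := 2) le_rfl).trans hprod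
  generalize greedyError 𝕜 f 0 = s₀ at *
  generalize greedyError 𝕜 f 2 = s₂ at *
  have amgm : A ^ 2 * B ≤ 4 * s₀ ^ 6 := by
    calc A ^ 2 * B ≤ 4 / 27 * (A + B) ^ 3 := by
          -- `4 (A + B)³ - 27 A² B = (A - 2 B)² (4 A + B)`
          have : 0 ≤ (A - 2 * B) ^ 2 * (4 * A + B) := by positivity
          linarith
      _ ≤ 4 / 27 * (3 * s₀ ^ 2) ^ 3 := by gcongr
      _ = 4 * s₀ ^ 6 := by ring
  have cube_le : (s₂ ^ 4) ^ 3 ≤ (2 / 3 * s₀ ^ 2 * B) ^ 3 := by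
    calc (s₂ ^ 4) ^ 3 = ((s₂ ^ 2) ^ 3) ^ 2 := by ring
      _ ≤ (A * (B / 2) ^ 2) ^ 2 := by gcongr
      _ = A ^ 2 * B * B ^ 3 / 16 := by ring
      _ ≤ 4 * s₀ ^ 6 * B ^ 3 / 16 := by gcongr
      _ = 1 / 4 * (s₀ ^ 6 * B ^ 3) := by ring
      _ ≤ 8 / 27 * (s₀ ^ 6 * B ^ 3) := mul_le_mul_of_nonneg_right (by norm_num) (by positivity)
      _ = (2 / 3 * s₀ ^ 2 * B) ^ 3 := by ring
  calc s₂ ^ 4 ≤ 2 / 3 * s₀ ^ 2 * B :=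
        (pow_le_pow_iff_left₀ (by positivity) (by positivity) three_ne_zero).1 cube_le
    _ ≤ 2 / 3 * s₀ ^ 2 * (3 * δ ^ 2) := by gcongr
    _ = 2 * s₀ ^ 2 * δ ^ 2 := by ring

lemma greedyError_two_sq_le (hf : IsGreedySequence 𝕜 S f) :
    greedyError 𝕜 f 2 ^ 2 ≤
      2 * greedyError 𝕜 f 0 * √(kolmogorovWidth 𝕜 S 1 * kolmogorovWidth 𝕜 S 2) := by
  have hσ₀ := greedyError_nonneg (𝕜 := 𝕜) f 0
  have hd₁ := kolmogorovWidth_nonneg (𝕜 := 𝕜) S 1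
  have hd₂ := kolmogorovWidth_nonneg (𝕜 := 𝕜) S 2
  refine (pow_le_pow_iff_left₀ (by positivity) (by positivity) four_ne_zero).1 ?_
  calc (greedyError 𝕜 f 2 ^ 2) ^ 4 = greedyError 𝕜 f 2 ^ 4 * greedyError 𝕜 f 2 ^ 4 := by ring
    _ ≤ 2 * greedyError 𝕜 f 0 ^ 2 * kolmogorovWidth 𝕜 S 1 ^ 2 *
          (8 * greedyError 𝕜 f 0 ^ 2 * kolmogorovWidth 𝕜 S 2 ^ 2) := by
        gcongr
        exacts [hf.greedyError_two_pow_four_le_kolmogorovWidth_one,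
          hf.greedyError_two_pow_four_le_kolmogorovWidth_two]
    _ = (2 * greedyError 𝕜 f 0) ^ 4 * (kolmogorovWidth 𝕜 S 1 * kolmogorovWidth 𝕜 S 2) ^ 2 := by
        ring
    _ = (2 * greedyError 𝕜 f 0 * √(kolmogorovWidth 𝕜 S 1 * kolmogorovWidth 𝕜 S 2)) ^ 4 := by
        rw [mul_pow _ √_, pow_mul √_ 2 2, Real.sq_sqrt (by positivity)]

end IsGreedySequence

lemma two_mul_two_rpow_mul_log_mul_rpow_le {α x y : ℝ} (hα : 0 ≤ α) (hy : 2 ≤ y) (hx : 0 < x)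
    (hxy : x ≤ 2 * y) :
    2 * ((2 : ℝ) ^ (-2 - 2 * α) * Real.log x * x ^ α) ≤ Real.log y * y ^ α := by
  have log_le : Real.log x ≤ 2 * Real.log y := by
    calc Real.log x ≤ Real.log (y ^ 2) := Real.log_le_log hx (by nlinarith)
      _ = 2 * Real.log y := by rw [Real.log_pow]; norm_cast
  have rpow_le : x ^ α ≤ 2 ^ (2 * α) * y ^ α := by
    rw [Real.rpow_mul zero_le_two, ← Real.mul_rpow (by positivity) (by positivity)]
    exact Real.rpow_le_rpow hx.le (by norm_num; linarith) hα
  have log_nonneg : 0 ≤ Real.log y := Real.log_nonneg (by linarith)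
  have two_rpow : (2 : ℝ) ^ (-2 - 2 * α) * 2 ^ (2 * α) = 1 / 4 := by
    rw [← Real.rpow_add two_pos, sub_add_cancel]; norm_num
  calc 2 * ((2 : ℝ) ^ (-2 - 2 * α) * Real.log x * x ^ α)
      ≤ 2 * ((2 : ℝ) ^ (-2 - 2 * α) * (2 * Real.log y) * (2 ^ (2 * α) * y ^ α)) := by gcongr
    _ = 4 * ((2 : ℝ) ^ (-2 - 2 * α) * 2 ^ (2 * α)) * (Real.log y * y ^ α) := by ring
    _ = Real.log y * y ^ α := by rw [two_rpow]; ring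

lemma two_rpow_neg_two_sub_le {α : ℝ} (hα : 0 ≤ α) : (2 : ℝ) ^ (-2 - 2 * α) ≤ 1 / 4 :=
  calc (2 : ℝ) ^ (-2 - 2 * α) ≤ 2 ^ (-2 : ℝ) :=
        Real.rpow_le_rpow_of_exponent_le one_le_two (by linarith)
    _ = 1 / 4 := by norm_num

lemma le_sqrt_mul_exp_of_sq_le {s C c a x : ℝ} (hC : 0 ≤ C) (hc : 0 ≤ c) (hx : 2 * a ≤ x)
    (hs : s ^ 2 ≤ 2 * (C * Real.exp (-c * x))) : s ≤ √(2 * C) * Real.exp (-c * a) := by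
  refine le_of_abs_le (abs_le_of_sq_le_sq ?_ (by positivity))
  have hexp : -c * x ≤ 2 * (-c * a) := by nlinarith
  calc s ^ 2 ≤ 2 * (C * Real.exp (-c * x)) := hs
    _ ≤ 2 * (C * Real.exp (2 * (-c * a))) := by gcongr
    _ = (√(2 * C) * Real.exp (-c * a)) ^ 2 := by
        rw [mul_pow, Real.sq_sqrt (by positivity), ← Real.exp_nat_mul]
        push_cast
        ring

lemma IsGreedySequence.greedyError_le_of_kolmogorovWidth_le (hf : IsGreedySequence 𝕜 S f)
    (hσ₀ : greedyError 𝕜 f 0 ≤ 1) {C₀ c₀ α : ℝ} (hc₀ : 0 ≤ c₀) (hα : 0 ≤ α)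
    (hd : ∀ n : ℕ, 1 ≤ n →
      kolmogorovWidth 𝕜 S n ≤ C₀ * Real.exp (-c₀ * (Real.log n * (n : ℝ) ^ α)))
    {n : ℕ} (hn : 2 ≤ n) :
    greedyError 𝕜 f n ≤
      √(2 * C₀) * Real.exp (-c₀ * ((2 : ℝ) ^ (-2 - 2 * α) * Real.log n * (n : ℝ) ^ α)) := by
  have hd₁ : kolmogorovWidth 𝕜 S 1 ≤ C₀ := by simpa using hd 1 le_rfl
  have hC₀ : 0 ≤ C₀ := (kolmogorovWidth_nonneg S 1).trans hd₁
  have two_mul_le {w : ℝ} (hw : 0 ≤ w) : 2 * greedyError 𝕜 f 0 * w ≤ 2 * w := by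
    gcongr
    linarith
  rcases hn.eq_or_lt with rfl | hn
  · refine le_sqrt_mul_exp_of_sq_le hC₀ hc₀ (x := Real.log (2 : ℕ) * ((2 : ℕ) : ℝ) ^ α / 2) ?_ ?_
    · have := mul_le_mul_of_nonneg_right (two_rpow_neg_two_sub_le hα)
        (mul_nonneg (Real.log_natCast_nonneg 2) (Real.rpow_nonneg (Nat.cast_nonneg 2) α))
      linarith
    · refine (hf.greedyError_two_sq_le.trans (two_mul_le (Real.sqrt_nonneg _))).trans ?_
      gcongr
      refine Real.sqrt_le_iff.2 ⟨by positivity, ?_⟩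
      calc kolmogorovWidth 𝕜 S 1 * kolmogorovWidth 𝕜 S 2
          ≤ C₀ * (C₀ * Real.exp (-c₀ * (Real.log (2 : ℕ) * ((2 : ℕ) : ℝ) ^ α))) :=
            mul_le_mul hd₁ (hd 2 one_le_two) (kolmogorovWidth_nonneg S 2) hC₀
        _ = (C₀ * Real.exp (-c₀ * (Real.log (2 : ℕ) * ((2 : ℕ) : ℝ) ^ α / 2))) ^ 2 := by
            rw [mul_pow, ← Real.exp_nat_mul, sq, mul_assoc]
            congr 3
            push_cast
            ring
  · obtain ⟨m, hm, hmn, hnm⟩ : ∃ m : ℕ, 2 ≤ m ∧ 2 * m ≤ n + 1 ∧ n ≤ 2 * m :=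
      ⟨(n + 1) / 2, by omega, by omega, by omega⟩
    refine le_sqrt_mul_exp_of_sq_le hC₀ hc₀ (two_mul_two_rpow_mul_log_mul_rpow_le (y := m) hα
      (by exact_mod_cast hm) (by positivity) (by exact_mod_cast hnm)) ?_
    calc greedyError 𝕜 f n ^ 2 ≤ 2 * kolmogorovWidth 𝕜 S m :=
          (hf.greedyError_sq_le (by omega) hmn).trans (two_mul_le (kolmogorovWidth_nonneg S m))
      _ ≤ _ := by
          gcongr
          exact hd m (by omega)

theorem two_set_greedy_exponential_log_decay_general {F Ftil : Set H} (hsub : Ftil ⊆ F)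
    (hbound : ∀ g ∈ F, ‖g‖ ≤ 1) (hf : IsGreedySequence 𝕜 Ftil f) {C₀ c₀ α : ℝ} (hc₀ : 0 ≤ c₀)
    (hα : 0 ≤ α)
    (hd : ∀ n : ℕ, 1 ≤ n →
      kolmogorovWidth 𝕜 F n ≤ C₀ * Real.exp (-c₀ * Real.log n * (n : ℝ) ^ α))
    {n : ℕ} (hn : 2 ≤ n) :
    greedyError 𝕜 f n ≤
      √(2 * C₀) * Real.exp (-((2 : ℝ) ^ (-2 - 2 * α) * c₀) * Real.log n * (n : ℝ) ^ α) := by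
  have hF : Bornology.IsBounded F := isBounded_iff_forall_norm_le.2 ⟨1, hbound⟩
  have hσ₀ : greedyError 𝕜 f 0 ≤ 1 := by
    rw [greedyError_zero]
    exact hbound _ (hsub (hf.mem 0))
  convert hf.greedyError_le_of_kolmogorovWidth_le hσ₀ hc₀ hα (fun m hm => ?_) hn using 3
  · ring
  · rw [← mul_assoc]
    exact (kolmogorovWidth_mono hF hsub m).trans (hd m hm)

end Greedy

/-- Two-set greedy algorithm: if `d_n(F) ≤ C₀ e^{-c₀ log(n) n^α}` for all `n ≥ 1`,
then `σ_n(F̃) ≤ √(2C₀) e^{-c̃₁ log(n) n^α}` for all `n ≥ 2`, with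
`c̃₁ = 2^{-2-2α} c₀ < c₀`. -/
theorem two_set_greedy_exponential_log_decay
    {H : Type*} [NormedAddCommGroup H] [InnerProductSpace ℝ H]
    (F Ftil : Set H) (hsub : Ftil ⊆ F) (hcomp : IsCompact F)
    (hbound : ∀ f ∈ F, ‖f‖ ≤ 1)
    (f : ℕ → H) (hmem : ∀ n, f n ∈ Ftil)
    (hgreedy : ∀ n : ℕ,
      Metric.infDist (f n) ((Submodule.span ℝ (f '' Set.Iio n) : Submodule ℝ H) : Set H)
        = ⨆ g : Ftil, Metric.infDist (g : H)
            ((Submodule.span ℝ (f '' Set.Iio n) : Submodule ℝ H) : Set H))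
    (C₀ c₀ α : ℝ) (hC₀ : 0 < C₀) (hc₀ : 0 < c₀) (hα : 0 < α)
    (hd : ∀ n : ℕ, 1 ≤ n →
      (⨅ Y : {Y : Submodule ℝ H // Module.rank ℝ Y ≤ n},
          ⨆ g : F, Metric.infDist (g : H) ((Y : Submodule ℝ H) : Set H))
        ≤ C₀ * Real.exp (-c₀ * Real.log n * (n : ℝ) ^ α)) :
    ((2 : ℝ) ^ (-2 - 2 * α) * c₀ < c₀) ∧
    ∀ n : ℕ, 2 ≤ n →
      (⨆ g : Ftil, Metric.infDist (g : H)
          ((Submodule.span ℝ (f '' Set.Iio n) : Submodule ℝ H) : Set H))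
        ≤ Real.sqrt (2 * C₀)
            * Real.exp (-((2 : ℝ) ^ (-2 - 2 * α) * c₀) * Real.log n * (n : ℝ) ^ α) := by
  refine ⟨mul_lt_of_lt_one_left hc₀ ((two_rpow_neg_two_sub_le hα.le).trans_lt (by norm_num)),
    fun n hn => ?_⟩
  have hf : IsGreedySequence ℝ Ftil f := .of_infDist_eq_iSup
    ((isBounded_iff_forall_norm_le.2 ⟨1, hbound⟩).subset hsub) hmem hgreedy
  rw [← hgreedy n]
  exact two_set_greedy_exponential_log_decay_general hsub hbound hf hc₀.le hα.le hd hn
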